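/- Let k ≥ 2 and n ≥ 16k². If G has the maximum spectral radius among all simple graphs on n vertices containing no k pairwise edge-disjoint cycles (i.e., with φ ≤ k−1), then G has a dominating vertex. -/

import Mathlib

open scoped Classical

namespace PaperEDC

/-- `G` contains `m` pairwise edge-disjoint cycles. -/
def HasEDC {V : Type*} (G : SimpleGraph V) (m : ℕ) : Prop :=
  ∃ c : Fin m → Σ v : V, G.Walk v v,
    (∀ i, (c i).2.IsCycle) ∧
    ∀ i j, i ≠ j → ∀ e ∈ (c i).2.edges, e ∉ (c j).2.edges

/-- `φ(G)`: the maximum number of pairwise edge-disjoint cycles in `G`. -/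
noncomputable def phi {V : Type*} (G : SimpleGraph V) : ℕ := sSup {m | HasEDC G m}

/-- `K₁ ∇ H`: the join of a single new vertex with `H`. -/
def joinK1 {V : Type*} (H : SimpleGraph V) : SimpleGraph (Option V) :=
  SimpleGraph.fromRel fun a b => a = none ∨ ∃ u v, a = some u ∧ b = some v ∧ H.Adj u v

/-- `t(G)`: the number of triangles of `G`. -/
noncomputable def triCount {V : Type*} (G : SimpleGraph V) : ℕ :=
  Nat.card {s : Finset V // G.IsNClique 3 s}

/-- A triangle-cactus: a connected graph in which every edge lies on a cycle and every
cycle is a triangle. -/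
def IsTriangleCactus {V : Type*} (G : SimpleGraph V) : Prop :=
  G.Connected ∧
  (∀ e ∈ G.edgeSet, ∃ (v : V) (w : G.Walk v v), w.IsCycle ∧ e ∈ w.edges) ∧
  ∀ (v : V) (w : G.Walk v v), w.IsCycle → w.length = 3

/-- `e(G)`: the number of edges of `G`. -/
noncomputable def ecard {V : Type*} (G : SimpleGraph V) : ℕ := Nat.card G.edgeSet

/-- `ρ(G)`: the spectral radius (largest adjacency eigenvalue) of `G`. -/
noncomputable def specRad {V : Type*} [Fintype V] (G : SimpleGraph V) : ℝ :=
  sSup {x : ℝ | ∃ f : V → ℝ, f ≠ 0 ∧ ∀ v : V, ∑ u : V, (if G.Adj v u then f u else 0) = x * f v}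

/-!
Scale a Perron vector `x` of an extremal graph `G` so that its largest entry is `x u = 1`, and write
`ρ` for the spectral radius. The star is a competitor, so `ρ ^ 2 ≥ n - 1` and hence
`ρ ≥ 4 (k - 1) + 39 / 10`.

Delete from `G`, as long as possible, the edges of a triangle or 4-cycle through `u`. This happens
`t ≤ k - 1` times. In the remaining graph `H` the neighbours of `u` are independent in `G`, every
other vertex has at most one of them as a neighbour, and fewer than `k - t` edge-disjoint cycles are
left, so `H` is a forest together with a graph of degree at most `2 (k - 1 - t)`. Applying the
eigenvalue equation twice therefore bounds the total weight `X` of the vertices outside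
`{u} ∪ N_H(u)` by a constant. This bound improves itself through `ρ x_v ≤ 1 + X`, where `v` carries
the largest entry off `u`, until `X ≤ 7 / 10` and `ρ x_v ≤ 17 / 10`.

Detaching a vertex `v` and hanging it on `u` creates no new cycle, so extremality forces `ρ x_v ≥ 1`
for all `v ≠ u`. If the set of non-neighbours of `u` were nonempty, summing the eigenvalue equation
over it would bound `ρ - 1` by `2 k` times `17 / 10`, contradicting the lower bound on `ρ`.
-/

section EdgeDisjointCycles

variable {V : Type*} {G H : SimpleGraph V} {m k : ℕ}

lemma HasEDC.zero (G : SimpleGraph V) : HasEDC G 0 :=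
  ⟨fun i => i.elim0, fun i => i.elim0, fun i => i.elim0⟩

lemma HasEDC.anti_right (hmk : m ≤ k) (h : HasEDC G k) : HasEDC G m := by
  obtain ⟨c, hc, hd⟩ := h
  exact ⟨fun i => c (i.castLE hmk), fun i => hc _,
    fun i j hij => hd _ _ fun h => hij (Fin.castLE_injective hmk h)⟩

lemma HasEDC.transfer (h : HasEDC G m)
    (hH : ∀ (v : V) (c : G.Walk v v), c.IsCycle → ∀ e ∈ c.edges, e ∈ H.edgeSet) :
    HasEDC H m := by
  obtain ⟨c, hc, hd⟩ := h
  refine ⟨fun i => ⟨(c i).1, (c i).2.transfer H (hH _ _ (hc i))⟩, fun i => (hc i).transfer _, ?_⟩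
  simpa only [SimpleGraph.Walk.edges_transfer] using hd

lemma HasEDC.of_deleteEdges {S : Set (Sym2 V)} {v : V} {c : G.Walk v v} (hc : c.IsCycle)
    (hS : ∀ e ∈ c.edges, e ∈ S) (h : HasEDC (G.deleteEdges S) m) : HasEDC G (m + 1) := by
  obtain ⟨d, hd, hdisj⟩ := h
  have hdG (i : Fin m) : ∀ e ∈ (d i).2.edges, e ∈ G.edgeSet := fun e he =>
    SimpleGraph.edgeSet_mono (G.deleteEdges_le S) ((d i).2.edges_subset_edgeSet he)
  have hdS (i : Fin m) : ∀ e ∈ (d i).2.edges, e ∉ S := fun e he =>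
    (G.edgeSet_deleteEdges S ▸ (d i).2.edges_subset_edgeSet he).2
  let d' : Fin (m + 1) → Σ v, G.Walk v v :=
    Fin.cons ⟨v, c⟩ fun i => ⟨(d i).1, (d i).2.transfer G (hdG i)⟩
  have hd'_zero : (d' 0).2.edges = c.edges := rfl
  have hd'_succ (i : Fin m) : (d' i.succ).2.edges = (d i).2.edges :=
    SimpleGraph.Walk.edges_transfer ..
  refine ⟨d', Fin.cases hc fun i => (hd i).transfer _, fun i j hij e => ?_⟩
  cases i using Fin.cases <;> cases j using Fin.cases <;> simp only [hd'_zero, hd'_succ]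
  case zero.zero => exact absurd rfl hij
  case zero.succ j => exact fun he he' => hdS j e he' (hS e he)
  case succ.zero i => exact fun he he' => hdS i e he (hS e he')
  case succ.succ i j => exact hdisj i j (fun h => hij (congrArg Fin.succ h)) e

lemma hasEDC_one_iff : HasEDC G 1 ↔ ¬ G.IsAcyclic := by
  constructor
  · rintro ⟨c, hc, -⟩ hG
    exact hG _ (hc 0)
  · intro hG
    simp only [SimpleGraph.IsAcyclic, not_forall, not_not] at hG
    obtain ⟨v, c, hc⟩ := hG
    exact ⟨fun _ => ⟨v, c⟩, fun _ => hc, fun i j hij => absurd (Subsingleton.elim i j) hij⟩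

variable [Finite V]

lemma HasEDC.le_card_sym2 (h : HasEDC G m) : m ≤ Nat.card (Sym2 V) := by
  obtain ⟨c, hc, hd⟩ := h
  have hne (i : Fin m) : ∃ e, e ∈ (c i).2.edges := by
    refine List.exists_mem_of_length_pos ?_
    have := (hc i).three_le_length
    rw [SimpleGraph.Walk.length_edges]
    omega
  choose e he using hne
  have he_inj : Function.Injective e := fun i j hij => by
    by_contra hne
    exact hd i j hne (e i) (he i) (hij ▸ he j)
  simpa using Nat.card_le_card_of_injective e he_inj

lemma phi_le_iff {K : ℕ} : phi G ≤ K ↔ ¬ HasEDC G (K + 1) := by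
  constructor
  · intro hG h
    have : K + 1 ≤ phi G := le_csSup ⟨_, fun _ hm => hm.le_card_sym2⟩ h
    omega
  · refine fun hG => csSup_le ⟨0, .zero G⟩ fun m hm => ?_
    by_contra hK
    exact hG (hm.anti_right (by omega))

lemma phi_starGraph_le (u : V) (K : ℕ) : phi (SimpleGraph.starGraph u) ≤ K :=
  phi_le_iff.2 fun h => hasEDC_one_iff.1 (h.anti_right (by omega))
    (SimpleGraph.isAcyclic_starGraph u)

end EdgeDisjointCycles

section ForestDecomposition

variable {V : Type*}

/- Root each component. For adjacent `v`, `w` at least one of the paths to the root uses the edge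
`vw`, and its starting vertex then has the other end as parent. -/
lemma exists_parent_of_isAcyclic {F : SimpleGraph V} (hF : F.IsAcyclic) :
    ∃ p : V → V, ∀ v w, F.Adj v w → p v = w ∨ p w = v := by
  let root (v : V) : V := (F.connectedComponentMk v).out
  have hroot (v : V) : F.Reachable v (root v) :=
    (SimpleGraph.ConnectedComponent.exact (Quot.out_eq (F.connectedComponentMk v))).symm
  choose P hP using fun v => (hroot v).exists_isPath
  have hP_unique {v x : V} (q : F.Walk v x) (hq : q.IsPath) (hx : x = root v) :
      q.snd = (P v).snd := by
    subst hx
    exact congrArg SimpleGraph.Walk.snd (congrArg Subtype.val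
      ((hF.subsingleton_path v (root v)).elim ⟨q, hq⟩ ⟨P v, hP v⟩))
  refine ⟨fun v => (P v).snd, fun v w hvw => ?_⟩
  by_cases hw : w ∈ (P v).support
  · exact Or.inl (hF.eq_snd_of_adj_start (hP v) hvw hw).symm
  · have hvw_root : root v = root w := by
      simp only [root, SimpleGraph.ConnectedComponent.sound hvw.reachable]
    have := hP_unique (.cons hvw.symm (P v)) ((hP v).cons hw) hvw_root
    exact Or.inr (this.symm.trans (SimpleGraph.Walk.snd_cons ..))

lemma ncard_neighborSet_toSubgraph_le_two {G : SimpleGraph V} {u : V} {c : G.Walk u u}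
    (hc : c.IsCycle) (v : V) : (c.toSubgraph.neighborSet v).ncard ≤ 2 := by
  by_cases hv : v ∈ c.support
  · exact (hc.ncard_neighborSet_toSubgraph_eq_two hv).le
  · have hempty : c.toSubgraph.neighborSet v = ∅ :=
      Set.eq_empty_of_forall_notMem fun w hw => hv (c.mem_verts_toSubgraph.1 hw.fst_mem)
    simp [hempty]

lemma exists_isAcyclic_sup_of_not_hasEDC {m : ℕ} : ∀ {G : SimpleGraph V}, ¬ HasEDC G (m + 1) →
    ∃ F C : SimpleGraph V, F.IsAcyclic ∧ (∀ v, (C.neighborSet v).ncard ≤ 2 * m) ∧ G ≤ F ⊔ C := by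
  induction m with
  | zero =>
    intro G hG
    exact ⟨G, ⊥, not_not.1 (hasEDC_one_iff.not.1 hG), by simp, le_sup_left⟩
  | succ m ih =>
    intro G hG
    by_cases hac : G.IsAcyclic
    · exact ⟨G, ⊥, hac, by simp, le_sup_left⟩
    simp only [SimpleGraph.IsAcyclic, not_forall, not_not] at hac
    obtain ⟨x, c, hc⟩ := hac
    obtain ⟨F, C, hF, hC, hGFC⟩ := ih (G := G.deleteEdges {e | e ∈ c.edges}) fun h =>
      hG (h.of_deleteEdges hc fun _ he => he)
    refine ⟨F, C ⊔ c.toSubgraph.spanningCoe, hF, fun v => ?_, fun v w hvw => ?_⟩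
    · exact (Set.ncard_union_le _ _).trans
        (add_le_add (hC v) (ncard_neighborSet_toSubgraph_le_two hc v))
    · by_cases he : s(v, w) ∈ c.edges
      · exact Or.inr (Or.inr (c.adj_toSubgraph_iff_mem_edges.2 he))
      · exact (hGFC (SimpleGraph.deleteEdges_adj.2 ⟨hvw, he⟩)).imp_right Or.inl

end ForestDecomposition

section Peeling

variable {V : Type*} {G H : SimpleGraph V} {u a w b : V} {t : ℕ}

/-- The closed walk `u a w b u` in `H` is a triangle, namely `u a b` when `w = b`, or a 4-cycle in
which the vertex `w` opposite to `u` is not a neighbour of `u`. -/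
structure IsShortCycle (H : SimpleGraph V) (u a w b : V) : Prop where
  ne : a ≠ b
  adj_left : H.Adj u a
  adj_right : H.Adj u b
  adj_mid : H.Adj a w
  triangle_or_square : w = b ∨ w ≠ u ∧ H.Adj w b ∧ ¬ H.Adj u w

/-- The edges of the closed walk `u a w b u`; for `w = b` the pair `s(w, b)` is a loop, so removing
it from a simple graph has no effect. -/
def shortCycleEdges (u a w b : V) : Set (Sym2 V) := {s(u, a), s(a, w), s(w, b), s(b, u)}

lemma IsShortCycle.hasEDC_succ (h : IsShortCycle H u a w b) {m : ℕ}
    (hm : HasEDC (H.deleteEdges (shortCycleEdges u a w b)) m) : HasEDC H (m + 1) := by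
  obtain ⟨hab, ha, hb, haw, rfl | ⟨hwu, hwb, -⟩⟩ := h
  · refine hm.of_deleteEdges (c := .cons ha (.cons haw (.cons hb.symm .nil))) ?_ ?_
    · simp [SimpleGraph.Walk.cons_isCycle_iff, hab, ha.ne, ha.ne', hb.ne, hb.ne']
    · intro e he
      simp only [SimpleGraph.Walk.edges_cons, SimpleGraph.Walk.edges_nil, List.mem_cons,
        List.not_mem_nil, or_false] at he
      rcases he with rfl | rfl | rfl <;> simp [shortCycleEdges]
  · refine hm.of_deleteEdges (c := .cons ha (.cons haw (.cons hwb (.cons hb.symm .nil)))) ?_ ?_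
    · simp [SimpleGraph.Walk.cons_isCycle_iff, hab, ha.ne, ha.ne', hb.ne, hb.ne',
        haw.ne, hwb.ne, hwu, hwu.symm]
    · intro e he
      simpa [shortCycleEdges] using he

lemma IsShortCycle.deleteEdges_adj_iff (h : IsShortCycle H u a w b) (x : V) :
    (H.deleteEdges (shortCycleEdges u a w b)).Adj u x ↔ H.Adj u x ∧ x ≠ a ∧ x ≠ b := by
  have hau := h.adj_left.ne'
  have hbu := h.adj_right.ne'
  have hwu : w ≠ u := by
    rcases h.triangle_or_square with rfl | h
    exacts [hbu, h.1]
  simp only [SimpleGraph.deleteEdges_adj, shortCycleEdges, Set.mem_insert_iff,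
    Set.mem_singleton_iff, Sym2.eq_iff]
  grind

lemma adj_deleteEdges_shortCycleEdges_or {x y : V} (hx : x ≠ u) (hy : y ≠ u) (hxy : H.Adj x y) :
    (H.deleteEdges (shortCycleEdges u a w b)).Adj x y ∨
      (x, y) ∈ ({(a, w), (w, a), (b, w), (w, b)} : Finset (V × V)) := by
  simp only [SimpleGraph.deleteEdges_adj, shortCycleEdges, Set.mem_insert_iff,
    Set.mem_singleton_iff, Sym2.eq_iff, Finset.mem_insert, Finset.mem_singleton, Prod.mk.injEq]
  grind

/-- `Peeling G u t H`: the graph `H` arises from `G` by deleting, one after the other, the edges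
of `t` short cycles through `u`. -/
inductive Peeling (G : SimpleGraph V) (u : V) : ℕ → SimpleGraph V → Prop
  | refl : Peeling G u 0 G
  | step {t : ℕ} {H : SimpleGraph V} {a w b : V} (hH : Peeling G u t H)
      (hc : IsShortCycle H u a w b) :
      Peeling G u (t + 1) (H.deleteEdges (shortCycleEdges u a w b))

namespace Peeling

lemma le (h : Peeling G u t H) : H ≤ G := by
  induction h with
  | refl => exact le_rfl
  | step _ _ ih => exact (SimpleGraph.deleteEdges_le _).trans ih

lemma hasEDC_add (h : Peeling G u t H) : ∀ {m : ℕ}, HasEDC H m → HasEDC G (m + t) := by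
  induction h with
  | refl => exact id
  | @step t H a w b _ hc ih =>
    intro m hm
    rw [show m + (t + 1) = m + 1 + t by omega]
    exact ih (hc.hasEDC_succ hm)

lemma adj_of_adj_left (h : Peeling G u t H) {x y : V} (hux : H.Adj u x) (hxy : G.Adj x y) :
    H.Adj x y := by
  induction h with
  | refl => exact hxy
  | @step _ H a w b _ hc ih =>
    obtain ⟨hx, hxa, hxb⟩ := (hc.deleteEdges_adj_iff x).1 hux
    by_cases hy : y = u
    · exact hy ▸ hux.symm
    refine (adj_deleteEdges_shortCycleEdges_or hx.ne' hy (ih hx)).resolve_right fun hmem => ?_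
    have hxw : x = w := by
      simp only [Finset.mem_insert, Finset.mem_singleton, Prod.mk.injEq] at hmem
      tauto
    rcases hc.triangle_or_square with hwb | ⟨-, -, huw⟩
    exacts [hxb (hxw.trans hwb), huw (hxw ▸ hx)]

lemma adj_of_not_adj (h : Peeling G u t H) {x y : V} (hx : ¬ G.Adj u x) (hy : ¬ G.Adj u y)
    (hxy : G.Adj x y) : H.Adj x y := by
  induction h with
  | refl => exact hxy
  | step hH hc ih =>
    have hxu : x ≠ u := fun h => hy (h ▸ hxy)
    have hyu : y ≠ u := fun h => hx (h ▸ hxy.symm)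
    refine (adj_deleteEdges_shortCycleEdges_or hxu hyu ih).resolve_right fun hmem => ?_
    have ha := hH.le hc.adj_left
    have hb := hH.le hc.adj_right
    simp only [Finset.mem_insert, Finset.mem_singleton, Prod.mk.injEq] at hmem
    rcases hmem with ⟨rfl, -⟩ | ⟨-, rfl⟩ | ⟨rfl, -⟩ | ⟨-, rfl⟩
    exacts [hx ha, hy ha, hx hb, hy hb]

variable [Finite V]

lemma ncard_neighborSet_sdiff (h : Peeling G u t H) :
    ((G \ H).neighborSet u).ncard = 2 * t := by
  induction h with
  | refl => simp
  | @step _ H a w b hH hc ih =>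
    have hinsert : (G \ H.deleteEdges (shortCycleEdges u a w b)).neighborSet u =
        insert a (insert b ((G \ H).neighborSet u)) := by
      ext x
      have ha : x = a → G.Adj u x := fun h => h ▸ hH.le hc.adj_left
      have hb : x = b → G.Adj u x := fun h => h ▸ hH.le hc.adj_right
      simp only [SimpleGraph.mem_neighborSet, SimpleGraph.sdiff_adj, hc.deleteEdges_adj_iff,
        Set.mem_insert_iff]
      tauto
    have hb : b ∉ (G \ H).neighborSet u := by simp [hc.adj_right]
    have ha : a ∉ insert b ((G \ H).neighborSet u) := by simp [hc.adj_left, hc.ne]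
    rw [hinsert, Set.ncard_insert_of_notMem ha, Set.ncard_insert_of_notMem hb, ih]
    ring

lemma ncard_adj_sdiff_le (h : Peeling G u t H) :
    {q : V × V | q.1 ≠ u ∧ q.2 ≠ u ∧ (G \ H).Adj q.1 q.2}.ncard ≤ 4 * t := by
  induction h with
  | refl => simp
  | @step _ H a w b _ _ ih =>
    have hcard : ({(a, w), (w, a), (b, w), (w, b)} : Finset (V × V)).card ≤ 4 :=
      Finset.card_le_four
    rw [← Set.ncard_coe_finset] at hcard
    refine (Set.ncard_le_ncard ?_).trans ((Set.ncard_union_le _ _).trans (add_le_add ih hcard))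
    rintro ⟨x, y⟩ ⟨hx, hy, hG, hH⟩
    by_cases hxy : H.Adj x y
    · exact Or.inr ((adj_deleteEdges_shortCycleEdges_or hx hy hxy).resolve_left hH)
    · exact Or.inl ⟨hx, hy, hG, hxy⟩

end Peeling

/-- A peeling that cannot be continued with a further short cycle. -/
structure IsMaximalPeeling (G : SimpleGraph V) (u : V) (t : ℕ) (H : SimpleGraph V) : Prop where
  peeling : Peeling G u t H
  not_isShortCycle (a w b : V) : ¬ IsShortCycle H u a w b

lemma exists_isMaximalPeeling {K : ℕ} (hG : ¬ HasEDC G (K + 1)) (u : V) :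
    ∃ t H, IsMaximalPeeling G u t H ∧ t ≤ K ∧ ¬ HasEDC H (K - t + 1) := by
  let P (t : ℕ) : Prop := ∃ H, Peeling G u t H
  have hP_le (t : ℕ) : P t → t ≤ K := by
    rintro ⟨H, hH⟩
    by_contra! hK
    exact hG ((hH.hasEDC_add (.zero H)).anti_right (by omega))
  obtain ⟨H, hH⟩ : P (Nat.findGreatest P K) := Nat.findGreatest_spec K.zero_le ⟨G, .refl⟩
  have ht : Nat.findGreatest P K ≤ K := Nat.findGreatest_le K
  refine ⟨_, H, ⟨hH, fun a w b hc => ?_⟩, ht, fun h => ?_⟩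
  · have hP_succ : P (Nat.findGreatest P K + 1) := ⟨_, hH.step hc⟩
    have := Nat.le_findGreatest (hP_le _ hP_succ) hP_succ
    omega
  · have := hH.hasEDC_add h
    rw [show K - Nat.findGreatest P K + 1 + Nat.findGreatest P K = K + 1 by omega] at this
    exact hG this

namespace IsMaximalPeeling

lemma isIndepSet (h : IsMaximalPeeling G u t H) : G.IsIndepSet (H.neighborSet u) := by
  intro x hx y hy hne hxy
  exact h.not_isShortCycle x y y
    ⟨hne, hx, hy, h.peeling.adj_of_adj_left hx hxy, Or.inl rfl⟩

lemma subsingleton_neighborSet_inter (h : IsMaximalPeeling G u t H) {v : V} (hv : v ≠ u) :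
    (G.neighborSet v ∩ H.neighborSet u).Subsingleton := by
  rintro x ⟨hvx, hx⟩ y ⟨hvy, hy⟩
  by_contra hne
  have hxv := h.peeling.adj_of_adj_left hx hvx.symm
  have hyv := h.peeling.adj_of_adj_left hy hvy.symm
  refine h.not_isShortCycle x v y ⟨hne, hx, hy, hxv, Or.inr ⟨hv, hyv.symm, fun huv => ?_⟩⟩
  exact h.isIndepSet huv hx hxv.ne' hvx

end IsMaximalPeeling

end Peeling

section Rayleigh

open Matrix

variable {ι : Type*} [Fintype ι] [DecidableEq ι] {A : Matrix ι ι ℝ}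

lemma posSemidef_sSup_spectrum_smul_one_sub (hA : A.IsHermitian) :
    (sSup (spectrum ℝ A) • (1 : Matrix ι ι ℝ) - A).PosSemidef := by
  refine Matrix.posSemidef_iff_isHermitian_and_spectrum_nonneg.2
    ⟨((IsSelfAdjoint.all _).smul (.one _)).sub hA, ?_⟩
  rw [← Algebra.algebraMap_eq_smul_one, ← spectrum.singleton_sub_eq]
  rintro _ ⟨_, rfl, μ, hμ, rfl⟩
  exact sub_nonneg.2 (le_csSup A.finite_real_spectrum.bddAbove hμ)

lemma dotProduct_smul_one_sub_mulVec (c : ℝ) (x : ι → ℝ) :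
    star x ⬝ᵥ (c • (1 : Matrix ι ι ℝ) - A) *ᵥ x = c * (x ⬝ᵥ x) - x ⬝ᵥ A *ᵥ x := by
  rw [star_trivial, sub_mulVec, smul_mulVec, one_mulVec, dotProduct_sub, dotProduct_smul,
    smul_eq_mul]

lemma dotProduct_mulVec_le_sSup_spectrum (hA : A.IsHermitian) (x : ι → ℝ) :
    x ⬝ᵥ A *ᵥ x ≤ sSup (spectrum ℝ A) * (x ⬝ᵥ x) := by
  have := (posSemidef_sSup_spectrum_smul_one_sub hA).dotProduct_mulVec_nonneg x
  rwa [dotProduct_smul_one_sub_mulVec, sub_nonneg] at this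

lemma mulVec_eq_sSup_spectrum_smul (hA : A.IsHermitian) {x : ι → ℝ}
    (hx : sSup (spectrum ℝ A) * (x ⬝ᵥ x) ≤ x ⬝ᵥ A *ᵥ x) :
    A *ᵥ x = sSup (spectrum ℝ A) • x := by
  have hzero : (sSup (spectrum ℝ A) • (1 : Matrix ι ι ℝ) - A) *ᵥ x = 0 := by
    rw [← (posSemidef_sSup_spectrum_smul_one_sub hA).dotProduct_mulVec_zero_iff,
      dotProduct_smul_one_sub_mulVec,
      (dotProduct_mulVec_le_sSup_spectrum hA x).antisymm hx, sub_self]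
  rw [sub_mulVec, smul_mulVec, one_mulVec, sub_eq_zero] at hzero
  exact hzero.symm

lemma exists_mulVec_eq_sSup_spectrum_smul [Nonempty ι] (hA : A.IsHermitian) :
    ∃ x : ι → ℝ, x ≠ 0 ∧ A *ᵥ x = sSup (spectrum ℝ A) • x := by
  have hne : (spectrum ℝ A).Nonempty :=
    hA.spectrum_real_eq_range_eigenvalues ▸ Set.range_nonempty _
  have hmem := hne.csSup_mem A.finite_real_spectrum
  rw [← Matrix.spectrum_toLin', ← Module.End.hasEigenvalue_iff_mem_spectrum] at hmem
  obtain ⟨x, hx⟩ := hmem.exists_hasEigenvector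
  rw [Matrix.spectrum_toLin'] at hx
  exact ⟨x, hx.2, hx.apply_eq_smul⟩

lemma exists_nonneg_mulVec_eq_sSup_spectrum_smul [Nonempty ι] (hA : A.IsHermitian)
    (hA_nonneg : ∀ i j, 0 ≤ A i j) :
    ∃ x : ι → ℝ, x ≠ 0 ∧ 0 ≤ x ∧ A *ᵥ x = sSup (spectrum ℝ A) • x := by
  obtain ⟨x, hx0, hx⟩ := exists_mulVec_eq_sSup_spectrum_smul hA
  refine ⟨|x|, fun h => hx0 (funext fun i => abs_eq_zero.1 (congrFun h i)), abs_nonneg x,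
    mulVec_eq_sSup_spectrum_smul hA ?_⟩
  have h_abs (i : ι) : |(A *ᵥ x) i| ≤ (A *ᵥ |x|) i := by
    refine (Finset.abs_sum_le_sum_abs _ _).trans_eq (Finset.sum_congr rfl fun j _ => ?_)
    rw [abs_mul, abs_of_nonneg (hA_nonneg i j), Pi.abs_apply]
  calc sSup (spectrum ℝ A) * (|x| ⬝ᵥ |x|)
      = x ⬝ᵥ A *ᵥ x := by
        simp [hx, dotProduct, Finset.mul_sum, mul_left_comm]
    _ ≤ |x| ⬝ᵥ A *ᵥ |x| := Finset.sum_le_sum fun i _ =>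
        (le_abs_self _).trans (abs_mul (x i) _ ▸ mul_le_mul_of_nonneg_left (h_abs i) (abs_nonneg _))

end Rayleigh

section Neighbors

open Matrix

variable {V : Type*} [Fintype V] {G H : SimpleGraph V} {u v : V}

/-- The finset of neighbours of `u`. In contrast to `SimpleGraph.neighborFinset` it does not
depend on a decidability instance, which would vary with the shape of the graph term. -/
noncomputable def nbrs (G : SimpleGraph V) (u : V) : Finset V := {v | G.Adj u v}

lemma mem_nbrs : v ∈ nbrs G u ↔ G.Adj u v := Finset.mem_filter_univ v

lemma ne_of_mem_nbrs (hv : v ∈ nbrs G u) : v ≠ u := (mem_nbrs.1 hv).ne'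

lemma card_nbrs : (nbrs G u).card = (G.neighborSet u).ncard := by
  rw [← Set.ncard_coe_finset]
  exact congrArg Set.ncard (Set.ext fun v => mem_nbrs)

lemma nbrs_union_nbrs (G H : SimpleGraph V) (u : V) : nbrs G u ∪ nbrs H u = nbrs (G ⊔ H) u := by
  ext v
  simp only [Finset.mem_union, mem_nbrs, SimpleGraph.sup_adj]

lemma disjoint_nbrs (h : Disjoint G H) (u : V) : Disjoint (nbrs G u) (nbrs H u) :=
  Finset.disjoint_left.2 fun _ hG hH =>
    SimpleGraph.disjoint_left.1 h _ _ (mem_nbrs.1 hG) (mem_nbrs.1 hH)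

lemma card_nbrs_top (u : V) : ((nbrs ⊤ u).card : ℝ) = Fintype.card V - 1 := by
  have : nbrs ⊤ u = Finset.univ.erase u := by
    ext v
    simp [mem_nbrs, eq_comm]
  rw [this, Finset.card_erase_of_mem (Finset.mem_univ u), Finset.card_univ,
    Nat.cast_pred (Fintype.card_pos_iff.2 ⟨u⟩)]

lemma adjMatrix_mulVec_apply_eq_sum_nbrs (G : SimpleGraph V) (x : V → ℝ) (v : V) :
    (G.adjMatrix ℝ *ᵥ x) v = ∑ z ∈ nbrs G v, x z := by
  rw [SimpleGraph.adjMatrix_mulVec_apply, SimpleGraph.neighborFinset_eq_filter, nbrs]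

end Neighbors

section SpectralRadius

open Matrix

variable {V : Type*} [Fintype V]

lemma specRad_eq_sSup_spectrum (G : SimpleGraph V) :
    specRad G = sSup (spectrum ℝ (G.adjMatrix ℝ)) := by
  refine congrArg sSup (Set.ext fun μ => ?_)
  rw [← Matrix.spectrum_toLin', ← Module.End.hasEigenvalue_iff_mem_spectrum]
  have heigen (f : V → ℝ) : (∀ v, ∑ u, (if G.Adj v u then f u else 0) = μ * f v) ↔
      G.adjMatrix ℝ *ᵥ f = μ • f := by
    simp only [funext_iff, adjMatrix_mulVec_apply_eq_sum_nbrs, nbrs, Finset.sum_filter,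
      Pi.smul_apply, smul_eq_mul]
  constructor
  · rintro ⟨f, hf, h⟩
    exact Module.End.hasEigenvalue_of_hasEigenvector
      ⟨Module.End.mem_eigenspace_iff.2 ((heigen f).1 h), hf⟩
  · intro h
    obtain ⟨f, hf⟩ := h.exists_hasEigenvector
    exact ⟨f, hf.2, (heigen f).2 hf.apply_eq_smul⟩

lemma dotProduct_adjMatrix_mulVec_le_specRad (G : SimpleGraph V) (x : V → ℝ) :
    x ⬝ᵥ G.adjMatrix ℝ *ᵥ x ≤ specRad G * (x ⬝ᵥ x) :=
  specRad_eq_sSup_spectrum G ▸ dotProduct_mulVec_le_sSup_spectrum (G.isHermitian_adjMatrix ℝ) x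

lemma adjMatrix_mulVec_eq_specRad_smul {G : SimpleGraph V} {x : V → ℝ}
    (hx : specRad G * (x ⬝ᵥ x) ≤ x ⬝ᵥ G.adjMatrix ℝ *ᵥ x) :
    G.adjMatrix ℝ *ᵥ x = specRad G • x := by
  rw [specRad_eq_sSup_spectrum] at hx ⊢
  exact mulVec_eq_sSup_spectrum_smul (G.isHermitian_adjMatrix ℝ) hx

lemma exists_nonneg_adjMatrix_mulVec_eq_specRad_smul [Nonempty V] (G : SimpleGraph V) :
    ∃ x : V → ℝ, x ≠ 0 ∧ 0 ≤ x ∧ G.adjMatrix ℝ *ᵥ x = specRad G • x := by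
  rw [specRad_eq_sSup_spectrum]
  refine exists_nonneg_mulVec_eq_sSup_spectrum_smul (G.isHermitian_adjMatrix ℝ) fun v w => ?_
  rw [SimpleGraph.adjMatrix_apply]
  split_ifs <;> norm_num

lemma le_specRad {G : SimpleGraph V} {μ : ℝ} {x : V → ℝ} (hx0 : x ≠ 0)
    (hx : G.adjMatrix ℝ *ᵥ x = μ • x) : μ ≤ specRad G := by
  have hpos : 0 < x ⬝ᵥ x := by simpa using dotProduct_star_self_pos_iff.2 hx0
  have := dotProduct_adjMatrix_mulVec_le_specRad G x
  rw [hx, dotProduct_smul, smul_eq_mul] at this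
  exact le_of_mul_le_mul_right this hpos

lemma sqrt_card_sub_one_le_specRad_starGraph (u : V) :
    √(Fintype.card V - 1) ≤ specRad (SimpleGraph.starGraph u) := by
  set q := √((Fintype.card V : ℝ) - 1) with hq
  let f : V → ℝ := fun v => if v = u then 1 else 1 / q
  have hfu : f u = 1 := if_pos rfl
  have hf {v : V} (hv : v ≠ u) : f v = 1 / q := if_neg hv
  refine le_specRad (x := f) (fun h => by simp [h] at hfu) (funext fun v => ?_)
  rw [adjMatrix_mulVec_apply_eq_sum_nbrs, Pi.smul_apply, smul_eq_mul]
  obtain rfl | hv := eq_or_ne v u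
  · have hN : nbrs (SimpleGraph.starGraph v) v = nbrs ⊤ v := by
      ext w
      simp [mem_nbrs]
    rw [hN, Finset.sum_congr rfl fun w hw => hf (ne_of_mem_nbrs hw), Finset.sum_const,
      nsmul_eq_mul, card_nbrs_top, hfu, mul_one, mul_one_div, hq, Real.div_sqrt]
  · have hN : nbrs (SimpleGraph.starGraph u) v = {u} := by
      ext w
      simp only [mem_nbrs, SimpleGraph.starGraph_adj, Finset.mem_singleton]
      grind
    have hq_pos : 0 < q := by
      rw [hq, ← card_nbrs_top u]
      exact Real.sqrt_pos.2 (Nat.cast_pos.2 (Finset.card_pos.2 ⟨v, mem_nbrs.2 hv.symm⟩))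
    rw [hN, Finset.sum_singleton, hfu, hf hv, mul_one_div_cancel hq_pos.ne']

end SpectralRadius

section Rehang

open Matrix

variable {V : Type*} {G : SimpleGraph V} {u v : V}

lemma notMem_support_of_isCycle {x : V} {c : G.Walk x x} (hc : c.IsCycle)
    (hv : (G.neighborSet v).Subsingleton) : v ∉ c.support := by
  intro hmem
  have htwo := hc.ncard_neighborSet_toSubgraph_eq_two hmem
  have hfin := Set.finite_of_ncard_pos (htwo ▸ two_pos)
  obtain ⟨a, b, ha, hb, hab⟩ := (Set.one_lt_ncard_iff hfin).1 (htwo ▸ one_lt_two)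
  exact hab (hv (c.toSubgraph.neighborSet_subset v ha) (c.toSubgraph.neighborSet_subset v hb))

/-- The graph obtained from `G` by detaching the vertex `v` and hanging it on `u`. -/
def rehang (G : SimpleGraph V) (u v : V) : SimpleGraph V :=
  G.deleteIncidenceSet v ⊔ SimpleGraph.edge u v

lemma rehang_adj (hvu : v ≠ u) {w : V} : (rehang G u v).Adj v w ↔ w = u := by
  simp only [rehang, SimpleGraph.sup_adj, SimpleGraph.deleteIncidenceSet_adj,
    SimpleGraph.edge_adj]
  grind

lemma deleteIncidenceSet_rehang :
    (rehang G u v).deleteIncidenceSet v = G.deleteIncidenceSet v := by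
  ext a b
  simp only [rehang, SimpleGraph.sup_adj, SimpleGraph.deleteIncidenceSet_adj,
    SimpleGraph.edge_adj]
  tauto

lemma phi_rehang_le [Finite V] {K : ℕ} (hG : phi G ≤ K) (hvu : v ≠ u) : phi (rehang G u v) ≤ K := by
  rw [phi_le_iff] at hG ⊢
  refine fun h => hG (h.transfer fun x c hc e he => ?_)
  have hv : v ∉ c.support := notMem_support_of_isCycle hc fun a ha b hb =>
    ((rehang_adj hvu).1 ha).trans ((rehang_adj hvu).1 hb).symm
  induction e with
  | _ a b =>
    have hav : a ≠ v := fun h => hv (h ▸ c.fst_mem_support_of_mem_edges he)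
    have hbv : b ≠ v := fun h => hv (h ▸ c.snd_mem_support_of_mem_edges he)
    have hab : ((rehang G u v).deleteIncidenceSet v).Adj a b :=
      SimpleGraph.deleteIncidenceSet_adj.2 ⟨c.adj_of_mem_edges he, hav, hbv⟩
    rw [deleteIncidenceSet_rehang] at hab
    exact G.deleteIncidenceSet_le v hab

variable [Fintype V]

lemma adjMatrix_rehang_mulVec_self (hvu : v ≠ u) (x : V → ℝ) :
    ((rehang G u v).adjMatrix ℝ *ᵥ x) v = x u := by
  have hN : nbrs (rehang G u v) v = {u} := by
    ext w
    rw [mem_nbrs, rehang_adj hvu, Finset.mem_singleton]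
  rw [adjMatrix_mulVec_apply_eq_sum_nbrs, hN, Finset.sum_singleton]

lemma dotProduct_adjMatrix_mulVec_of_deleteIncidenceSet_eq {H : SimpleGraph V}
    (hH : G.deleteIncidenceSet v = H) (x : V → ℝ) :
    x ⬝ᵥ G.adjMatrix ℝ *ᵥ x = x ⬝ᵥ H.adjMatrix ℝ *ᵥ x + 2 * x v * (G.adjMatrix ℝ *ᵥ x) v := by
  have hH_adj (a b : V) : H.Adj a b ↔ G.Adj a b ∧ a ≠ v ∧ b ≠ v := by
    rw [← hH, SimpleGraph.deleteIncidenceSet_adj]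
  have hsplit : G.adjMatrix ℝ = H.adjMatrix ℝ +
      vecMulVec (Pi.single v 1) (G.adjMatrix ℝ v) +
      vecMulVec (G.adjMatrix ℝ v) (Pi.single v 1) := by
    ext a b
    simp only [Matrix.add_apply, vecMulVec_apply, SimpleGraph.adjMatrix_apply, hH_adj,
      Pi.single_apply]
    by_cases ha : a = v <;> by_cases hb : b = v <;> simp [ha, hb, G.adj_comm]
  have hmulVec : (G.adjMatrix ℝ *ᵥ x) v = G.adjMatrix ℝ v ⬝ᵥ x := rfl
  rw [hmulVec]
  conv_lhs => rw [hsplit]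
  simp only [add_mulVec, vecMulVec_mulVec, dotProduct_add, dotProduct_smul, single_dotProduct,
    dotProduct_single, MulOpposite.smul_eq_mul_unop, MulOpposite.unop_op]
  rw [dotProduct_comm x (G.adjMatrix ℝ v)]
  ring

lemma dotProduct_adjMatrix_rehang_mulVec (hvu : v ≠ u) (x : V → ℝ) :
    x ⬝ᵥ (rehang G u v).adjMatrix ℝ *ᵥ x =
      x ⬝ᵥ G.adjMatrix ℝ *ᵥ x + 2 * x v * (x u - (G.adjMatrix ℝ *ᵥ x) v) := by
  have hxu : ((rehang G u v).adjMatrix ℝ *ᵥ x) v = x u := adjMatrix_rehang_mulVec_self hvu x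
  rw [dotProduct_adjMatrix_mulVec_of_deleteIncidenceSet_eq
      (deleteIncidenceSet_rehang (G := G) (u := u) (v := v)) x, hxu,
    dotProduct_adjMatrix_mulVec_of_deleteIncidenceSet_eq (G := G) rfl x]
  ring

lemma apply_le_specRad_mul_apply {K : ℕ} (hG : phi G ≤ K)
    (hmax : ∀ G' : SimpleGraph V, phi G' ≤ K → specRad G' ≤ specRad G) {x : V → ℝ}
    (hx_nonneg : 0 ≤ x) (hx : G.adjMatrix ℝ *ᵥ x = specRad G • x) (hvu : v ≠ u) :
    x u ≤ specRad G * x v := by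
  set G' := rehang G u v with hG'
  by_contra! hlt
  have hform : x ⬝ᵥ G'.adjMatrix ℝ *ᵥ x =
      specRad G * (x ⬝ᵥ x) + 2 * x v * (x u - specRad G * x v) := by
    rw [hG', dotProduct_adjMatrix_rehang_mulVec hvu, hx, dotProduct_smul, smul_eq_mul,
      Pi.smul_apply, smul_eq_mul]
  have hG'_le : specRad G' * (x ⬝ᵥ x) ≤ specRad G * (x ⬝ᵥ x) :=
    mul_le_mul_of_nonneg_right (hmax _ (phi_rehang_le hG hvu))
      (Finset.sum_nonneg fun w _ => mul_self_nonneg (x w))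
  have hgain : 0 ≤ 2 * x v * (x u - specRad G * x v) :=
    mul_nonneg (mul_nonneg zero_le_two (hx_nonneg v)) (sub_nonneg.2 hlt.le)
  have heq : G'.adjMatrix ℝ *ᵥ x = specRad G' • x :=
    adjMatrix_mulVec_eq_specRad_smul (by linarith)
  have hxv : x v = 0 := by
    have := dotProduct_adjMatrix_mulVec_le_specRad G' x
    have : x v * (x u - specRad G * x v) = 0 := by linarith
    exact (mul_eq_zero.1 this).resolve_right (sub_pos.2 hlt).ne'
  have hxu : x u = specRad G' * x v := by
    rw [← adjMatrix_rehang_mulVec_self hvu x, ← hG', heq, Pi.smul_apply, smul_eq_mul]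
  simp [hxv, hxu] at hlt

end Rehang

section RelationSums

variable {α : Type*} {R R₁ R₂ : α → α → Prop} {A B : Finset α} {x : α → ℝ} {M : ℝ} {c : ℕ}

/-- The sum of `x z` over all pairs `(v, z)` in `A × B` related by `R`. It is estimated by
counting either the `z` related to a given `v` (rows) or the `v` related to a given `z`
(columns). -/
noncomputable def relSum (R : α → α → Prop) (A B : Finset α) (x : α → ℝ) : ℝ :=
  ∑ v ∈ A, ∑ z ∈ B with R v z, x z

lemma relSum_eq_sum_card_mul :
    relSum R A B x = ∑ z ∈ B, ((A.filter (R · z)).card : ℝ) * x z := by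
  simp only [relSum, Finset.sum_filter]
  rw [Finset.sum_comm]
  simp only [← Finset.sum_filter, Finset.sum_const, nsmul_eq_mul]

lemma relSum_le_of_card_column_le (hx : ∀ z ∈ B, 0 ≤ x z)
    (hc : ∀ z ∈ B, (A.filter (R · z)).card ≤ c) : relSum R A B x ≤ c * ∑ z ∈ B, x z := by
  rw [relSum_eq_sum_card_mul, Finset.mul_sum]
  exact Finset.sum_le_sum fun z hz =>
    mul_le_mul_of_nonneg_right (Nat.cast_le.2 (hc z hz)) (hx z hz)

lemma relSum_le_of_card_row_le (hM : 0 ≤ M) (hx : ∀ z ∈ B, x z ≤ M)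
    (hc : ∀ v ∈ A, (B.filter (R v)).card ≤ c) : relSum R A B x ≤ A.card * (c * M) := by
  rw [← nsmul_eq_mul]
  refine Finset.sum_le_card_nsmul _ _ _ fun v hv => ?_
  calc ∑ z ∈ B with R v z, x z
      ≤ (B.filter (R v)).card • M :=
        Finset.sum_le_card_nsmul _ _ _ fun z hz => hx z (Finset.mem_filter.1 hz).1
    _ ≤ c * M := by
        rw [nsmul_eq_mul]
        exact mul_le_mul_of_nonneg_right (Nat.cast_le.2 (hc v hv)) hM

lemma relSum_le_of_ncard_le [Finite α] (hM : 0 ≤ M) (hx : ∀ z ∈ B, x z ≤ M) {S : Set (α × α)}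
    (hS : ∀ v ∈ A, ∀ z ∈ B, R v z → (v, z) ∈ S) (hc : S.ncard ≤ c) : relSum R A B x ≤ c * M := by
  have hcard : ((A ×ˢ B).filter fun q => R q.1 q.2).card ≤ c := by
    rw [← Set.ncard_coe_finset]
    refine (Set.ncard_le_ncard fun q hq => ?_).trans hc
    obtain ⟨hq, hR⟩ := Finset.mem_filter.1 hq
    exact hS _ (Finset.mem_product.1 hq).1 _ (Finset.mem_product.1 hq).2 hR
  calc relSum R A B x
      = ∑ q ∈ A ×ˢ B with R q.1 q.2, x q.2 := by
        simp only [relSum, Finset.sum_filter, Finset.sum_product]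
    _ ≤ ((A ×ˢ B).filter fun q => R q.1 q.2).card • M :=
        Finset.sum_le_card_nsmul _ _ _ fun q hq =>
          hx _ (Finset.mem_product.1 (Finset.mem_filter.1 hq).1).2
    _ ≤ c * M := by
        rw [nsmul_eq_mul]
        exact mul_le_mul_of_nonneg_right (Nat.cast_le.2 hcard) hM

lemma relSum_le_relSum_add_relSum (hx : ∀ z ∈ B, 0 ≤ x z)
    (hR : ∀ v ∈ A, ∀ z ∈ B, R v z → R₁ v z ∨ R₂ v z) :
    relSum R A B x ≤ relSum R₁ A B x + relSum R₂ A B x := by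
  simp only [relSum, Finset.sum_filter, ← Finset.sum_add_distrib]
  refine Finset.sum_le_sum fun v hv => Finset.sum_le_sum fun z hz => ?_
  have := hx z hz
  have := hR v hv z hz
  split_ifs <;> first | linarith | tauto

lemma relSum_union_right {B' : Finset α} (hB : Disjoint B B') :
    relSum R A (B ∪ B') x = relSum R A B x + relSum R A B' x := by
  simp only [relSum, Finset.filter_union, ← Finset.sum_add_distrib]
  exact Finset.sum_congr rfl fun v _ =>
    Finset.sum_union (Finset.disjoint_filter_filter hB)

lemma card_filter_le_one {P : α → Prop} (hP : ∀ v ∈ A, ∀ w ∈ A, P v → P w → v = w) :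
    (A.filter P).card ≤ 1 := by
  refine Finset.card_le_one.2 fun v hv w hw => ?_
  rw [Finset.mem_filter] at hv hw
  exact hP v hv.1 w hw.1 hv.2 hw.2

lemma card_filter_le_ncard [Finite α] {P : α → Prop} (S : Set α) (hP : ∀ v, P v → v ∈ S) :
    (A.filter P).card ≤ S.ncard := by
  rw [← Set.ncard_coe_finset]
  exact Set.ncard_le_ncard fun v hv => hP v (Finset.mem_filter.1 hv).2

end RelationSums

section ParentCover

variable {V : Type*} {H C : SimpleGraph V} {p : V → V} {D : ℕ}

/-- Every edge of `H` joins a vertex to its parent under `p`, or lies in the graph `C`, whose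
degrees are at most `D`. -/
structure IsParentCover (H : SimpleGraph V) (p : V → V) (C : SimpleGraph V) (D : ℕ) : Prop where
  adj (v w : V) : H.Adj v w → p v = w ∨ p w = v ∨ C.Adj v w
  ncard_neighborSet_le (v : V) : (C.neighborSet v).ncard ≤ D

/-- `z` is joined to `v` by an edge which is not covered as the edge from `v` to its parent. -/
def IsChildOrAdj (H : SimpleGraph V) (p : V → V) (C : SimpleGraph V) (v z : V) : Prop :=
  H.Adj v z ∧ (p z = v ∨ C.Adj v z)

lemma exists_isParentCover {m : ℕ} (hH : ¬ HasEDC H (m + 1)) :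
    ∃ p C, IsParentCover H p C (2 * m) := by
  obtain ⟨F, C, hF, hC, hle⟩ := exists_isAcyclic_sup_of_not_hasEDC hH
  obtain ⟨p, hp⟩ := exists_parent_of_isAcyclic hF
  exact ⟨p, C, fun v w h => (hle h).elim (fun h => (hp v w h).imp_right .inl)
    fun h => .inr (.inr h), hC⟩

namespace IsParentCover

variable {A B : Finset V} {x : V → ℝ} {M : ℝ}

lemma relSum_adj_le (hC : IsParentCover H p C D) (hx : 0 ≤ x) (hM : 0 ≤ M)
    (hxM : ∀ z ∈ B, x z ≤ M) :
    relSum H.Adj A B x ≤ A.card * M + relSum (IsChildOrAdj H p C) A B x := by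
  have hparent : relSum (fun v z => p v = z) A B x ≤ A.card * ((1 : ℕ) * M) :=
    relSum_le_of_card_row_le hM hxM fun v _ =>
      card_filter_le_one fun _ _ _ _ h₁ h₂ => h₁.symm.trans h₂
  rw [Nat.cast_one, one_mul] at hparent
  exact (relSum_le_relSum_add_relSum (fun z _ => hx z) fun v _ z _ h =>
    (hC.adj v z h).imp_right fun h' => ⟨h, h'⟩).trans (add_le_add_left hparent _)

variable [Finite V]

lemma card_isChildOrAdj_le (hC : IsParentCover H p C D) (z : V) :
    (A.filter (IsChildOrAdj H p C · z)).card ≤ 1 + D := by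
  refine (card_filter_le_ncard ({p z} ∪ C.neighborSet z) fun v hv => ?_).trans
    ((Set.ncard_union_le _ _).trans ?_)
  · exact hv.2.imp Eq.symm .symm
  · rw [Set.ncard_singleton]
    exact Nat.add_le_add_left (hC.ncard_neighborSet_le z) 1

lemma relSum_isChildOrAdj_le_sum (hC : IsParentCover H p C D) (hx : ∀ z ∈ B, 0 ≤ x z) :
    relSum (IsChildOrAdj H p C) A B x ≤ (1 + D) * ∑ z ∈ B, x z := by
  have := relSum_le_of_card_column_le (c := 1 + D) hx fun z _ => hC.card_isChildOrAdj_le (A := A) z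
  rwa [Nat.cast_add, Nat.cast_one] at this

lemma relSum_isChildOrAdj_le_sum_add (hC : IsParentCover H p C D) (hx : 0 ≤ x) (hM : 0 ≤ M)
    (hxM : ∀ z ∈ B, x z ≤ M) :
    relSum (IsChildOrAdj H p C) A B x ≤ ∑ z ∈ B, x z + A.card * (D * M) := by
  have hchild : relSum (fun v z => p z = v) A B x ≤ (1 : ℕ) * ∑ z ∈ B, x z :=
    relSum_le_of_card_column_le (fun z _ => hx z) fun _ _ =>
      card_filter_le_one fun _ _ _ _ h₁ h₂ => h₁.symm.trans h₂
  have hadj : relSum C.Adj A B x ≤ A.card * (D * M) :=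
    relSum_le_of_card_row_le hM hxM fun v _ =>
      (card_filter_le_ncard (C.neighborSet v) fun _ h => h).trans (hC.ncard_neighborSet_le v)
  rw [Nat.cast_one, one_mul] at hchild
  exact (relSum_le_relSum_add_relSum (fun z _ => hx z) fun v _ z _ h => h.2).trans
    (add_le_add hchild hadj)

end IsParentCover

end ParentCover

section PerronVector

open Matrix

variable {V : Type*} [Fintype V] {G : SimpleGraph V} {u : V} {x : V → ℝ}

/-- A nonnegative eigenvector of `G` for the spectral radius, normalised so that its largest entry
is `x u = 1`. -/
structure IsPerronVector (G : SimpleGraph V) (u : V) (x : V → ℝ) : Prop where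
  nonneg : 0 ≤ x
  mulVec_eq : G.adjMatrix ℝ *ᵥ x = specRad G • x
  le_one (v : V) : x v ≤ 1
  apply_eq_one : x u = 1

lemma exists_isPerronVector [Nonempty V] (G : SimpleGraph V) : ∃ u x, IsPerronVector G u x := by
  obtain ⟨x, hx0, hx_nonneg, hx⟩ := exists_nonneg_adjMatrix_mulVec_eq_specRad_smul G
  obtain ⟨u, hu⟩ := Finite.exists_max x
  have hu_pos : 0 < x u := by
    refine (hx_nonneg u).lt_of_ne' fun h => hx0 (funext fun v => ?_)
    exact ((hu v).trans_eq h).antisymm (hx_nonneg v)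
  refine ⟨u, (x u)⁻¹ • x, smul_nonneg (inv_nonneg.2 hu_pos.le) hx_nonneg, ?_, fun v => ?_, ?_⟩
  · rw [mulVec_smul, hx, smul_comm]
  · exact inv_mul_le_one_of_le₀ (hu v) hu_pos.le
  · exact inv_mul_cancel₀ hu_pos.ne'

namespace IsPerronVector

lemma specRad_mul_apply (hx : IsPerronVector G u x) (v : V) :
    specRad G * x v = ∑ z ∈ nbrs G v, x z := by
  rw [← adjMatrix_mulVec_apply_eq_sum_nbrs, hx.mulVec_eq, Pi.smul_apply, smul_eq_mul]

lemma specRad_mul_apply_eq_ite_add (hx : IsPerronVector G u x) (v : V) :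
    specRad G * x v =
      (if G.Adj v u then 1 else 0) + ∑ z ∈ nbrs ⊤ u with G.Adj v z, x z := by
  have huniv : (Finset.univ : Finset V) = insert u (nbrs ⊤ u) := by
    ext z
    simp [mem_nbrs, eq_or_ne, eq_comm]
  have hu : u ∉ nbrs ⊤ u := fun h => ne_of_mem_nbrs h rfl
  rw [hx.specRad_mul_apply, nbrs, Finset.sum_filter, huniv, Finset.sum_insert hu,
    ← Finset.sum_filter, hx.apply_eq_one]

lemma specRad_mul_sum (hx : IsPerronVector G u x) (A : Finset V) :
    specRad G * ∑ v ∈ A, x v =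
      (A.filter (G.Adj · u)).card + relSum G.Adj A (nbrs ⊤ u) x := by
  simp only [Finset.mul_sum, hx.specRad_mul_apply_eq_ite_add, Finset.sum_add_distrib,
    Finset.sum_boole, relSum]

end IsPerronVector

end PerronVector

section Estimates

variable {V : Type*} [Fintype V] {G H C : SimpleGraph V} {u : V} {t D : ℕ} {p : V → V}
  {x : V → ℝ} {M : ℝ}

lemma relSum_nbrs_top (R : V → V → Prop) (A : Finset V) (H : SimpleGraph V) (u : V)
    (x : V → ℝ) :
    relSum R A (nbrs ⊤ u) x = relSum R A (nbrs H u) x + relSum R A (nbrs Hᶜ u) x := by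
  rw [← relSum_union_right (disjoint_nbrs disjoint_compl_right u), nbrs_union_nbrs,
    sup_compl_eq_top]

lemma nbrs_sdiff_union_nbrs_compl (hle : H ≤ G) (u : V) :
    nbrs (G \ H) u ∪ nbrs Gᶜ u = nbrs Hᶜ u := by
  rw [nbrs_union_nbrs, sdiff_eq, sup_inf_right, sup_compl_eq_top, top_inf_eq,
    sup_eq_left.2 (compl_le_compl hle)]

namespace IsMaximalPeeling

lemma card_nbrs_sdiff (h : IsMaximalPeeling G u t H) : (nbrs (G \ H) u).card = 2 * t :=
  card_nbrs.trans h.peeling.ncard_neighborSet_sdiff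

lemma card_filter_adj_le_one (h : IsMaximalPeeling G u t H) {v : V} (hv : v ≠ u) :
    ((nbrs H u).filter (G.Adj v)).card ≤ 1 :=
  card_filter_le_one fun _ ha _ hb hva hvb =>
    h.subsingleton_neighborSet_inter hv ⟨hva, mem_nbrs.1 ha⟩ ⟨hvb, mem_nbrs.1 hb⟩

lemma relSum_nbrs_le_sum (h : IsMaximalPeeling G u t H) (hx : 0 ≤ x) :
    relSum G.Adj (nbrs H u) (nbrs Hᶜ u) x ≤ ∑ z ∈ nbrs Hᶜ u, x z := by
  have := relSum_le_of_card_column_le (R := G.Adj) (A := nbrs H u) (c := 1) (fun z _ => hx z)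
    fun z (hz : z ∈ nbrs Hᶜ u) => by
      simpa only [G.adj_comm] using h.card_filter_adj_le_one (ne_of_mem_nbrs hz)
  rwa [Nat.cast_one, one_mul] at this

lemma sum_filter_adj_nbrs_le (h : IsMaximalPeeling G u t H) {v : V} (hv : v ≠ u) (hM : 0 ≤ M)
    (hxM : ∀ w ≠ u, x w ≤ M) : ∑ z ∈ nbrs H u with G.Adj v z, x z ≤ M := by
  have := relSum_le_of_card_row_le (A := {v}) hM (fun z hz => hxM z (ne_of_mem_nbrs hz))
    fun w hw => h.card_filter_adj_le_one (Finset.mem_singleton.1 hw ▸ hv)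
  simpa [relSum] using this

lemma specRad_mul_apply_of_adj (h : IsMaximalPeeling G u t H) (hx : IsPerronVector G u x) {i : V}
    (hi : H.Adj u i) : specRad G * x i = 1 + ∑ z ∈ nbrs Hᶜ u with G.Adj i z, x z := by
  have hindep : (nbrs H u).filter (G.Adj i) = ∅ := Finset.filter_eq_empty_iff.2 fun j hj hij =>
    h.isIndepSet hi (mem_nbrs.1 hj) hij.ne hij
  rw [hx.specRad_mul_apply_eq_ite_add, if_pos (h.peeling.le hi).symm]
  have := relSum_nbrs_top G.Adj {i} H u x
  simpa [relSum, hindep] using this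

lemma specRad_mul_apply_le (h : IsMaximalPeeling G u t H) (hx : IsPerronVector G u x) {v : V}
    (hv : v ≠ u) (hmax : ∀ w ≠ u, x w ≤ x v) :
    specRad G * x v ≤ 1 + ∑ z ∈ nbrs Hᶜ u, x z := by
  by_cases huv : H.Adj u v
  · rw [h.specRad_mul_apply_of_adj hx huv]
    exact add_le_add_right (Finset.sum_le_sum_of_subset_of_nonneg (Finset.filter_subset _ _)
      fun z _ _ => hx.nonneg z) 1
  have hI := h.sum_filter_adj_nbrs_le hv (hx.nonneg v) hmax
  have hQ : x v + ∑ z ∈ nbrs Hᶜ u with G.Adj v z, x z ≤ ∑ z ∈ nbrs Hᶜ u, x z := by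
    have hv_notMem : v ∉ (nbrs Hᶜ u).filter (G.Adj v) := by simp
    rw [← Finset.sum_insert hv_notMem]
    refine Finset.sum_le_sum_of_subset_of_nonneg (Finset.insert_subset ?_
      (Finset.filter_subset _ _)) fun z _ _ => hx.nonneg z
    exact mem_nbrs.2 ⟨hv.symm, huv⟩
  have hsplit := relSum_nbrs_top G.Adj {v} H u x
  simp only [relSum, Finset.sum_singleton] at hsplit
  rw [hx.specRad_mul_apply_eq_ite_add, hsplit]
  split_ifs <;> linarith

lemma card_nbrs_compl_le (h : IsMaximalPeeling G u t H) (hx : IsPerronVector G u x)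
    (hr : (Fintype.card V : ℝ) - 1 ≤ specRad G ^ 2) (hr_nonneg : 0 ≤ specRad G)
    (hxM : ∀ w ≠ u, x w ≤ M) :
    ((nbrs Hᶜ u).card : ℝ) ≤ ∑ z ∈ nbrs Hᶜ u, x z + 2 * t * (specRad G * M) := by
  have hcard : ((nbrs H u).card : ℝ) + (nbrs Hᶜ u).card = Fintype.card V - 1 := by
    rw [← card_nbrs_top u, ← Nat.cast_add,
      ← Finset.card_union_of_disjoint (disjoint_nbrs disjoint_compl_right u), nbrs_union_nbrs,
      sup_compl_eq_top]
  have hu : specRad G = ∑ z ∈ nbrs H u, x z + ∑ z ∈ nbrs (G \ H) u, x z := by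
    rw [← Finset.sum_union (disjoint_nbrs disjoint_sdiff_self_right u), nbrs_union_nbrs,
      sup_sdiff_cancel_right h.peeling.le, ← hx.specRad_mul_apply, hx.apply_eq_one, mul_one]
  have hkept : specRad G * ∑ z ∈ nbrs H u, x z =
      (nbrs H u).card + relSum G.Adj (nbrs H u) (nbrs Hᶜ u) x := by
    rw [Finset.mul_sum, Finset.sum_congr rfl fun i hi =>
      h.specRad_mul_apply_of_adj hx (mem_nbrs.1 hi), Finset.sum_add_distrib]
    simp [relSum]
  have hremoved : ∑ z ∈ nbrs (G \ H) u, x z ≤ 2 * t * M := by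
    have := Finset.sum_le_card_nsmul (nbrs (G \ H) u) x M fun z hz => hxM z (ne_of_mem_nbrs hz)
    rw [nsmul_eq_mul, h.card_nbrs_sdiff] at this
    exact_mod_cast this
  have hsq : specRad G ^ 2 =
      specRad G * ∑ z ∈ nbrs H u, x z + specRad G * ∑ z ∈ nbrs (G \ H) u, x z := by
    rw [← mul_add, ← hu, sq]
  linarith [h.relSum_nbrs_le_sum hx.nonneg, mul_le_mul_of_nonneg_left hremoved hr_nonneg]

lemma specRad_mul_sum_nbrs_compl (h : IsMaximalPeeling G u t H) (hx : IsPerronVector G u x) :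
    specRad G * ∑ z ∈ nbrs Hᶜ u, x z = 2 * t + relSum G.Adj (nbrs Hᶜ u) (nbrs ⊤ u) x := by
  have hT : (nbrs Hᶜ u).filter (G.Adj · u) = nbrs (G \ H) u := by
    ext v
    simp only [Finset.mem_filter, mem_nbrs, SimpleGraph.compl_adj, SimpleGraph.sdiff_adj,
      G.adj_comm v u]
    exact ⟨fun hv => ⟨hv.2, hv.1.2⟩, fun hv => ⟨⟨hv.1.ne, hv.2⟩, hv.1⟩⟩
  rw [hx.specRad_mul_sum, hT, h.card_nbrs_sdiff]
  push_cast
  rfl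

lemma relSum_adj_nbrs_top_le (h : IsMaximalPeeling G u t H) (hC : IsParentCover H p C D)
    (hx : 0 ≤ x) (hM : 0 ≤ M) (hxM : ∀ w ≠ u, x w ≤ M) :
    relSum G.Adj (nbrs Hᶜ u) (nbrs ⊤ u) x ≤ 4 * t * M + (nbrs Hᶜ u).card * M +
      relSum (IsChildOrAdj H p C) (nbrs Hᶜ u) (nbrs ⊤ u) x := by
  have hxM' (z : V) (hz : z ∈ nbrs ⊤ u) : x z ≤ M := hxM z (ne_of_mem_nbrs hz)
  have hremoved : relSum (G \ H).Adj (nbrs Hᶜ u) (nbrs ⊤ u) x ≤ (4 * t : ℕ) * M :=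
    relSum_le_of_ncard_le (S := {q | q.1 ≠ u ∧ q.2 ≠ u ∧ (G \ H).Adj q.1 q.2}) hM hxM'
      (fun v hv z hz hvz => ⟨ne_of_mem_nbrs hv, ne_of_mem_nbrs hz, hvz⟩)
      h.peeling.ncard_adj_sdiff_le
  have hsplit : relSum G.Adj (nbrs Hᶜ u) (nbrs ⊤ u) x ≤
      relSum (G \ H).Adj (nbrs Hᶜ u) (nbrs ⊤ u) x + relSum H.Adj (nbrs Hᶜ u) (nbrs ⊤ u) x :=
    relSum_le_relSum_add_relSum (fun z _ => hx z) fun v _ z _ hvz =>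
      (em (H.Adj v z)).symm.imp_left fun hH => ⟨hvz, hH⟩
  have hcover := hC.relSum_adj_le (A := nbrs Hᶜ u) hx hM hxM'
  push_cast at hremoved
  linarith

lemma specRad_mul_relSum_isChildOrAdj_le (h : IsMaximalPeeling G u t H)
    (hC : IsParentCover H p C D) (hx : IsPerronVector G u x) :
    specRad G * relSum (IsChildOrAdj H p C) (nbrs Hᶜ u) (nbrs H u) x ≤
      (nbrs Hᶜ u).card + (1 + D) * ∑ z ∈ nbrs Hᶜ u, x z := by
  let y (i : V) : ℝ := ∑ z ∈ nbrs Hᶜ u with G.Adj i z, x z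
  have hy : 0 ≤ y := fun i => Finset.sum_nonneg fun z _ => hx.nonneg z
  have hexpand : specRad G * relSum (IsChildOrAdj H p C) (nbrs Hᶜ u) (nbrs H u) x =
      relSum (IsChildOrAdj H p C) (nbrs Hᶜ u) (nbrs H u) 1 +
        relSum (IsChildOrAdj H p C) (nbrs Hᶜ u) (nbrs H u) y := by
    simp only [relSum, Finset.mul_sum, ← Finset.sum_add_distrib]
    refine Finset.sum_congr rfl fun v _ => Finset.sum_congr rfl fun i hi => ?_
    exact h.specRad_mul_apply_of_adj hx (mem_nbrs.1 (Finset.mem_filter.1 hi).1)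
  have hone : relSum (IsChildOrAdj H p C) (nbrs Hᶜ u) (nbrs H u) 1 ≤
      (nbrs Hᶜ u).card * ((1 : ℕ) * 1) :=
    relSum_le_of_card_row_le zero_le_one (fun _ _ => le_rfl) fun v hv =>
      (Finset.card_le_card (Finset.monotone_filter_right _ fun _ _ hvz =>
        h.peeling.le hvz.1)).trans (h.card_filter_adj_le_one (ne_of_mem_nbrs hv))
  have hrest : relSum (IsChildOrAdj H p C) (nbrs Hᶜ u) (nbrs H u) y ≤
      (1 + D) * relSum G.Adj (nbrs H u) (nbrs Hᶜ u) x :=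
    hC.relSum_isChildOrAdj_le_sum fun i _ => hy i
  have hD : (0 : ℝ) ≤ 1 + D := by positivity
  have := mul_le_mul_of_nonneg_left (h.relSum_nbrs_le_sum hx.nonneg) hD
  rw [Nat.cast_one, one_mul, mul_one] at hone
  linarith

lemma specRad_sq_mul_sum_le (h : IsMaximalPeeling G u t H) (hC : IsParentCover H p C D)
    (hx : IsPerronVector G u x) (hr : 0 ≤ specRad G) (hM : 0 ≤ M) (hxM : ∀ w ≠ u, x w ≤ M) :
    specRad G ^ 2 * ∑ z ∈ nbrs Hᶜ u, x z ≤
      specRad G * (2 * t + 4 * t * M + (nbrs Hᶜ u).card * M + (1 + D) * ∑ z ∈ nbrs Hᶜ u, x z) +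
        ((nbrs Hᶜ u).card + (1 + D) * ∑ z ∈ nbrs Hᶜ u, x z) := by
  have hsum := h.specRad_mul_sum_nbrs_compl hx
  have htop := h.relSum_adj_nbrs_top_le hC hx.nonneg hM hxM
  have hkept := h.specRad_mul_relSum_isChildOrAdj_le hC hx
  have hrest := hC.relSum_isChildOrAdj_le_sum (A := nbrs Hᶜ u) fun z (_ : z ∈ nbrs Hᶜ u) =>
    hx.nonneg z
  rw [relSum_nbrs_top (IsChildOrAdj H p C) _ H] at htop
  have hone : specRad G * ∑ z ∈ nbrs Hᶜ u, x z ≤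
      2 * t + 4 * t * M + (nbrs Hᶜ u).card * M + (1 + D) * ∑ z ∈ nbrs Hᶜ u, x z +
        relSum (IsChildOrAdj H p C) (nbrs Hᶜ u) (nbrs H u) x := by linarith
  have := mul_le_mul_of_nonneg_left hone hr
  linarith

lemma specRad_mul_sum_nonadj_le (h : IsMaximalPeeling G u t H) (hC : IsParentCover H p C D)
    (hx : IsPerronVector G u x) (hM : 0 ≤ M) (hxM : ∀ w ≠ u, x w ≤ M) :
    specRad G * ∑ z ∈ nbrs Gᶜ u, x z ≤
      (2 * t + D + 2) * ((nbrs Gᶜ u).card * M) + ∑ z ∈ nbrs Gᶜ u, x z := by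
  set S := nbrs Gᶜ u
  have hxM' {L : SimpleGraph V} (z : V) (hz : z ∈ nbrs L u) : x z ≤ M := hxM z (ne_of_mem_nbrs hz)
  have hSu : S.filter (G.Adj · u) = ∅ := Finset.filter_eq_empty_iff.2 fun v hv hvu =>
    (mem_nbrs.1 hv).2 hvu.symm
  have hsum : specRad G * ∑ z ∈ S, x z = relSum G.Adj S (nbrs H u) x +
      (relSum G.Adj S (nbrs (G \ H) u) x + relSum G.Adj S S x) := by
    have hdisj : Disjoint (G \ H) Gᶜ := disjoint_compl_right.mono_left sdiff_le
    rw [hx.specRad_mul_sum, hSu, relSum_nbrs_top G.Adj S H,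
      ← nbrs_sdiff_union_nbrs_compl h.peeling.le, relSum_union_right (disjoint_nbrs hdisj u),
      Finset.card_empty, Nat.cast_zero, zero_add]
  have hkept : relSum G.Adj S (nbrs H u) x ≤ S.card * ((1 : ℕ) * M) :=
    relSum_le_of_card_row_le hM hxM' fun v hv => h.card_filter_adj_le_one (ne_of_mem_nbrs hv)
  have hremoved : relSum G.Adj S (nbrs (G \ H) u) x ≤ S.card * ((2 * t : ℕ) * M) :=
    relSum_le_of_card_row_le hM hxM' fun v _ =>
      (Finset.card_le_card (Finset.filter_subset _ _)).trans h.card_nbrs_sdiff.le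
  have hsurvive : relSum G.Adj S S x = relSum H.Adj S S x := by
    refine Finset.sum_congr rfl fun v hv => Finset.sum_congr (Finset.filter_congr fun z hz => ?_)
      fun _ _ => rfl
    exact ⟨h.peeling.adj_of_not_adj (mem_nbrs.1 hv).2 (mem_nbrs.1 hz).2,
      fun hvz => h.peeling.le hvz⟩
  have hcover := hC.relSum_adj_le (A := S) (B := S) hx.nonneg hM hxM'
  have hchild := hC.relSum_isChildOrAdj_le_sum_add (A := S) (B := S) hx.nonneg hM hxM'
  push_cast at hkept hremoved
  linarith

end IsMaximalPeeling

end Estimates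

section Numerics

variable {K t r A X y : ℝ}

lemma four_mul_add_le_of_sq_le (hK : 1 ≤ K) (hr : 0 ≤ r) (hr_sq : 16 * (K + 1) ^ 2 - 1 ≤ r ^ 2) :
    4 * K + 39 / 10 ≤ r :=
  le_of_sq_le_sq (by nlinarith) hr

lemma le_five_of_mul_le (ht : 0 ≤ t) (htK : t ≤ K) (hr : 4 * K + 39 / 10 ≤ r)
    (hA : r * (2 * K + 2 * t + 29 / 10) - (2 * K + 2) ≤ A) (hX : 0 ≤ X) (hyr : y ≤ r)
    (hXA : X * A ≤ 2 * t * r + (8 * t + (1 + 2 * t) * X) * y) : X ≤ 5 := by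
  have hr_pos : 0 < r := by linarith
  have hA' : (2 * K + 1) * r ≤ A - (1 + 2 * t) * r := by linarith
  have hcoeff : 0 ≤ 8 * t + (1 + 2 * t) * X := by positivity
  have hlin : X * ((2 * K + 1) * r) ≤ 10 * K * r := by
    calc X * ((2 * K + 1) * r) ≤ X * (A - (1 + 2 * t) * r) := mul_le_mul_of_nonneg_left hA' hX
      _ ≤ 10 * t * r := by linarith [mul_le_mul_of_nonneg_left hyr hcoeff]
      _ ≤ 10 * K * r := by gcongr
  have hcancel : X * (2 * K + 1) ≤ 10 * K := le_of_mul_le_mul_right (by linarith) hr_pos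
  nlinarith

lemma mul_sub_le_of_le {B : ℝ} (ht : 0 ≤ t) (hX : 0 ≤ X) (hXB : X ≤ B) (hyX : y ≤ 1 + X)
    (hXA : X * A ≤ 2 * t * r + (8 * t + (1 + 2 * t) * X) * y) :
    X * (A - (8 * t + (1 + 2 * t) * (1 + B))) ≤ 2 * t * r + 8 * t := by
  calc X * (A - (8 * t + (1 + 2 * t) * (1 + B)))
      = X * A - X * 8 * t - (1 + 2 * t) * X * (1 + B) := by ring
    _ ≤ X * A - X * 8 * t - (1 + 2 * t) * X * y := by gcongr; linarith
    _ ≤ 2 * t * r + 8 * t * (y - X) := by linarith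
    _ ≤ 2 * t * r + 8 * t := by nlinarith

lemma le_seven_tenths_of_mul_le (hK : 1 ≤ K) (ht : 0 ≤ t) (htK : t ≤ K) (hr : 4 * K + 39 / 10 ≤ r)
    (hA : r * (2 * K + 2 * t + 29 / 10) - (2 * K + 2) ≤ A) (hX : 0 ≤ X) (hyr : y ≤ r)
    (hyX : y ≤ 1 + X) (hXA : X * A ≤ 2 * t * r + (8 * t + (1 + 2 * t) * X) * y) : X ≤ 7 / 10 := by
  have hfive : X ≤ 5 := le_five_of_mul_le ht htK hr hA hX hyr hXA
  have hone : X ≤ 1 := by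
    have hbound := mul_sub_le_of_le ht hX hfive hyX hXA
    have hcoeff : 2 * t * r + 8 * t < A - (8 * t + (1 + 2 * t) * (1 + 5)) := by
      have : (4 * K + 39 / 10) * (2 * K + 29 / 10) ≤ r * (2 * K + 29 / 10) := by gcongr
      nlinarith
    have : 0 ≤ 2 * t * r + 8 * t := by nlinarith
    nlinarith
  have hbound := mul_sub_le_of_le ht hX hone hyX hXA
  have hcoeff : 2 * t * r + 8 * t < 7 / 10 * (A - (8 * t + (1 + 2 * t) * (1 + 1))) := by
    have : (4 * K + 39 / 10) * (8 * K + 203 / 10) ≤ r * (14 * K - 6 * t + 203 / 10) := by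
      gcongr <;> linarith
    nlinarith [sq_nonneg (K - 1)]
  have : 0 ≤ 2 * t * r + 8 * t := by nlinarith
  nlinarith

lemma sub_one_le_of_mul_le {s c m Y : ℝ} (hs : 0 < s) (hr : 1 ≤ r) (hsY : s ≤ r * Y)
    (hY : r * Y ≤ c * (s * m) + Y) : r - 1 ≤ c * (r * m) := by
  refine le_of_mul_le_mul_left ?_ hs
  calc s * (r - 1)
      ≤ (r * Y) * (r - 1) := mul_le_mul_of_nonneg_right hsY (sub_nonneg.2 hr)
    _ = r * (r * Y - Y) := by ring
    _ ≤ r * (c * (s * m)) := mul_le_mul_of_nonneg_left (by linarith) (zero_le_one.trans hr)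
    _ = s * (c * (r * m)) := by ring

end Numerics

section Extremal

variable {V : Type*} [Fintype V] {G H C : SimpleGraph V} {u v : V} {t d K : ℕ} {p : V → V}
  {x : V → ℝ}

lemma four_mul_add_le_specRad (hK : 1 ≤ K)
    (hcard : 16 * (K + 1) ^ 2 ≤ Fintype.card V)
    (hr : √(Fintype.card V - 1) ≤ specRad G) : 4 * (K : ℝ) + 39 / 10 ≤ specRad G := by
  have hcard' : 16 * ((K : ℝ) + 1) ^ 2 ≤ Fintype.card V := by exact_mod_cast hcard
  refine four_mul_add_le_of_sq_le (Nat.one_le_cast.2 hK) ((Real.sqrt_nonneg _).trans hr) ?_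
  exact (sub_le_sub_right hcard' 1).trans (Real.sqrt_le_iff.1 hr).2

namespace IsMaximalPeeling

lemma sum_nbrs_compl_mul_le (h : IsMaximalPeeling G u t H) (hC : IsParentCover H p C d)
    (hx : IsPerronVector G u x) (hr : √(Fintype.card V - 1) ≤ specRad G) (hv : v ≠ u)
    (hxv : ∀ w ≠ u, x w ≤ x v) :
    (∑ z ∈ nbrs Hᶜ u, x z) * (specRad G ^ 2 - (1 + d) * specRad G - (2 + d)) ≤
      2 * t * specRad G +
        (8 * t + (1 + 2 * t) * ∑ z ∈ nbrs Hᶜ u, x z) * (specRad G * x v) := by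
  have hr_nonneg : 0 ≤ specRad G := (Real.sqrt_nonneg _).trans hr
  have hy : 0 ≤ specRad G * x v := mul_nonneg hr_nonneg (hx.nonneg v)
  have hmain := h.specRad_sq_mul_sum_le hC hx hr_nonneg (hx.nonneg v) hxv
  have hmax := h.specRad_mul_apply_le hx hv hxv
  have hcard := h.card_nbrs_compl_le hx (Real.sqrt_le_iff.1 hr).2 hr_nonneg hxv
  set r := specRad G
  set X := ∑ z ∈ nbrs Hᶜ u, x z
  have hcard_mul := mul_le_mul_of_nonneg_right hcard (by linarith : 0 ≤ 1 + r * x v)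
  have hsq : 2 * t * (r * x v) * (r * x v) ≤ 2 * t * (r * x v) * (1 + X) :=
    mul_le_mul_of_nonneg_left hmax (by positivity)
  linarith

lemma specRad_mul_apply_le_seventeen_tenths (h : IsMaximalPeeling G u t H)
    (hC : IsParentCover H p C (2 * d)) (hx : IsPerronVector G u x) (hd : 1 ≤ t + d)
    (hcard : 16 * (t + d + 1) ^ 2 ≤ Fintype.card V) (hr : √(Fintype.card V - 1) ≤ specRad G)
    (hv : v ≠ u) (hxv : ∀ w ≠ u, x w ≤ x v) : specRad G * x v ≤ 17 / 10 := by
  have hr_ge := four_mul_add_le_specRad hd hcard hr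
  have hmain := h.sum_nbrs_compl_mul_le hC hx hr hv hxv
  have hmax := h.specRad_mul_apply_le hx hv hxv
  have hv_le := mul_le_mul_of_nonneg_left (hx.le_one v) ((Real.sqrt_nonneg _).trans hr)
  have hX := le_seven_tenths_of_mul_le (K := t + d) (t := t) (by exact_mod_cast hd) t.cast_nonneg
    (le_add_of_nonneg_right d.cast_nonneg) (by exact_mod_cast hr_ge) ?_
    (Finset.sum_nonneg fun z _ => hx.nonneg z) (hv_le.trans_eq (mul_one _)) hmax hmain
  · linarith
  · push_cast at hr_ge ⊢
    nlinarith [t.cast_nonneg (α := ℝ)]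

lemma nbrs_compl_eq_empty (h : IsMaximalPeeling G u t H)
    (hC : IsParentCover H p C (2 * d)) (hx : IsPerronVector G u x) (hd : 1 ≤ t + d)
    (hcard : 16 * (t + d + 1) ^ 2 ≤ Fintype.card V) (hr : √(Fintype.card V - 1) ≤ specRad G)
    (hle : ∀ v ≠ u, 1 ≤ specRad G * x v) : nbrs Gᶜ u = ∅ := by
  by_contra hS
  obtain ⟨w, hw⟩ := Finset.nonempty_iff_ne_empty.2 hS
  obtain ⟨v, hv, hxv⟩ := ({u}ᶜ : Finset V).exists_max_image x
    ⟨w, by simpa using ne_of_mem_nbrs hw⟩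
  simp only [Finset.mem_compl, Finset.mem_singleton] at hv hxv
  have hr_ge := four_mul_add_le_specRad hd hcard hr
  have hv_le := h.specRad_mul_apply_le_seventeen_tenths hC hx hd hcard hr hv hxv
  have hsum := h.specRad_mul_sum_nonadj_le hC hx (hx.nonneg v) hxv
  have hcard_le : ((nbrs Gᶜ u).card : ℝ) ≤ specRad G * ∑ z ∈ nbrs Gᶜ u, x z := by
    rw [Finset.mul_sum, ← nsmul_one]
    exact Finset.card_nsmul_le_sum _ _ _ fun z hz => hle z (ne_of_mem_nbrs hz)
  have hS_pos : (0 : ℝ) < (nbrs Gᶜ u).card := Nat.cast_pos.2 (Finset.card_pos.2 ⟨w, hw⟩)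
  push_cast at hr_ge hsum
  have hd' : (1 : ℝ) ≤ t + d := by exact_mod_cast hd
  have hr_le := sub_one_le_of_mul_le hS_pos (by linarith) hcard_le hsum
  have := mul_le_mul_of_nonneg_left hv_le (by positivity : (0 : ℝ) ≤ 2 * t + 2 * d + 2)
  linarith

end IsMaximalPeeling

end Extremal

/-- For `k ≥ 2` and `n ≥ 16k²`, a spectral-extremal graph among all `n`-vertex graphs
without `k` pairwise edge-disjoint cycles has a dominating vertex. -/
theorem spectral_extremal_has_dominating_vertex (k n : ℕ) (hk : 2 ≤ k)
    (hn : 16 * k ^ 2 ≤ n) {V : Type*} [Fintype V] (hV : Fintype.card V = n)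
    (G : SimpleGraph V) (hG : phi G ≤ k - 1)
    (hmax : ∀ G' : SimpleGraph V, phi G' ≤ k - 1 → specRad G' ≤ specRad G) :
    ∃ u : V, ∀ v, v ≠ u → G.Adj u v := by
  have : Nonempty V := Fintype.card_pos_iff.1 (by nlinarith)
  obtain ⟨u, x, hx⟩ := exists_isPerronVector G
  obtain ⟨t, H, hH, ht, hH_edc⟩ := exists_isMaximalPeeling (phi_le_iff.1 hG) u
  obtain ⟨p, C, hC⟩ := exists_isParentCover hH_edc
  have hr : √(Fintype.card V - 1) ≤ specRad G :=
    (sqrt_card_sub_one_le_specRad_starGraph u).trans (hmax _ (phi_starGraph_le u _))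
  have hle (v : V) (hv : v ≠ u) : 1 ≤ specRad G * x v :=
    hx.apply_eq_one ▸ apply_le_specRad_mul_apply hG hmax hx.nonneg hx.mulVec_eq hv
  have hk' : t + (k - 1 - t) + 1 = k := by omega
  have hempty : nbrs Gᶜ u = ∅ :=
    hH.nbrs_compl_eq_empty hC hx (by omega) (by rw [hk', hV]; exact hn) hr hle
  refine ⟨u, fun v hv => by_contra fun huv => Finset.notMem_empty v ?_⟩
  exact hempty ▸ mem_nbrs.2 ⟨hv.symm, huv⟩

end PaperEDC
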